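/- The Lusternik–Schnirelmann category of the compact symplectic group Sp(3) is at most 5: there exist six open sets U₀,…,U₅ covering Sp(3) such that each inclusion map Uᵢ ↪ Sp(3) is nullhomotopic. -/

import Mathlib

open Quaternion Matrix

/-- `CatLE X n` : `cat(X) ≤ n`, i.e. `X` can be covered by `n+1` open sets,
each of whose inclusion maps into `X` is nullhomotopic. -/
def CatLE (X : Type*) [TopologicalSpace X] (n : ℕ) : Prop :=
  ∃ U : Fin (n + 1) → Set X,
    (∀ i, IsOpen (U i)) ∧ (⋃ i, U i) = Set.univ ∧
    ∀ i, (⟨Subtype.val, continuous_subtype_val⟩ : C(U i, X)).Nullhomotopic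

/-- The compact symplectic group `Sp(3)`, realized as the quaternionic unitary
group of 3×3 matrices, with the subspace topology. -/
abbrev Sp3 : Type :=
  {A : Matrix (Fin 3) (Fin 3) ℍ[ℝ] // Aᴴ * A = 1}


/-! For `G ∈ Sp(n)`, the set of `A` with `A + G` invertible is the domain of a Cayley transform
centred at `G`, hence open and contractible to `G` inside `Sp(n)`. A matrix that lies neither in
this domain nor in that of `G` with the `k`-th column negated agrees with `-G` on a nonzero vector
of the hyperplane `x k = 0`. So an `A` missing the six domains coming from `1`, `-1` and a third
matrix `T` yields nonzero `x`, `y`, `z` in the quaternionic plane `e₀^⊥` with `A x = -x`, `A y = y`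
and `A z = -T z`. As `A` preserves inner products, `x ⟂ y`, `x ⟂ T z - z` and `y ⟂ T z + z`; in a
plane this forces the compressions of `T z - z` and `T z + z` to be orthogonal, and `T` is chosen so
that this happens only for `z = 0`. -/

instance {R : Type*} [CommRing R] [CharZero R] : CharZero ℍ[R] :=
  charZero_of_injective_algebraMap (R := R) Quaternion.coe_injective

section LinearAlgebra

variable {m n : Type*} [Fintype m] [Fintype n]

theorem isUnit_of_forall_mulVec_eq_zero [DecidableEq n] {D : Type*} [DivisionRing D]
    {M : Matrix n n D} (h : ∀ x, M *ᵥ x = 0 → x = 0) : IsUnit M := by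
  have : IsArtinianRing (Matrix n n D)ᵐᵒᵖ :=
    RingEquiv.mopMatrix.surjective.isArtinianRing
  rw [IsArtinianRing.isUnit_iff_isLeftRegular, isLeftRegular_iff_mulVec_injective]
  intro x y hxy
  exact sub_eq_zero.mp (h _ (by rw [mulVec_sub, sub_eq_zero]; exact hxy))

theorem exists_mulVec_eq_neg_mulVec_of_not_isUnit_add [DecidableEq n] {D : Type*} [DivisionRing D]
    {A G : Matrix n n D} (h : ¬IsUnit (A + G)) : ∃ x, x ≠ 0 ∧ A *ᵥ x = -(G *ᵥ x) := by
  contrapose! h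
  refine isUnit_of_forall_mulVec_eq_zero fun x hx => not_imp_not.mp (h x) ?_
  rwa [← add_eq_zero_iff_eq_neg, ← add_mulVec]

theorem star_mulVec_dotProduct_mulVec [DecidableEq n] {D : Type*} [Semiring D] [StarRing D]
    {A : Matrix m n D} (hA : Aᴴ * A = 1) (x y : n → D) :
    star (A *ᵥ x) ⬝ᵥ (A *ᵥ y) = star x ⬝ᵥ y := by
  rw [star_mulVec, dotProduct_mulVec, vecMul_vecMul, hA, vecMul_one]

theorem star_mulVec_dotProduct_mulVec_of_mulVec_eq_neg [DecidableEq n] {D : Type*} [Ring D]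
    [StarRing D] {A G H : Matrix m n D} (hA : Aᴴ * A = 1) {x y : n → D}
    (hx : A *ᵥ x = -(G *ᵥ x)) (hy : A *ᵥ y = -(H *ᵥ y)) :
    star (G *ᵥ x) ⬝ᵥ (H *ᵥ y) = star x ⬝ᵥ y := by
  simpa [hx, hy] using star_mulVec_dotProduct_mulVec hA x y

theorem star_dotProduct_self_eq_zero_of_quaternion {R : Type*} [CommRing R] [LinearOrder R]
    [IsStrictOrderedRing R] {x : n → ℍ[R]} : star x ⬝ᵥ x = 0 ↔ x = 0 := by
  have hsum : star x ⬝ᵥ x = ((∑ i, normSq (x i) : R) : ℍ[R]) := by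
    simp only [dotProduct, Pi.star_apply, Quaternion.star_mul_self]
    exact (map_sum (algebraMap R ℍ[R]) _ _).symm
  rw [hsum, ← Quaternion.coe_zero, Quaternion.coe_inj,
    Finset.sum_eq_zero_iff_of_nonneg fun _ _ => normSq_nonneg]
  simp [funext_iff]

instance {S R : Type*} [CommRing R] [Monoid S] [Star S] [TrivialStar S]
    [DistribMulAction S R] : StarModule S ℍ[R] :=
  ⟨fun s a => by rw [Quaternion.star_smul, star_trivial s]⟩

theorem isUnit_smul_add_smul_of_isometry [DecidableEq n] {G A : Matrix n n ℍ[ℝ]}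
    (hG : Gᴴ * G = 1) (hA : Aᴴ * A = 1) {a b : ℝ} (hab : a ^ 2 ≠ b ^ 2) :
    IsUnit (a • G + b • A) := by
  refine isUnit_of_forall_mulVec_eq_zero fun x hx =>
    star_dotProduct_self_eq_zero_of_quaternion.mp ?_
  have hGA : a • (G *ᵥ x) = -(b • (A *ᵥ x)) := by
    rwa [← add_eq_zero_iff_eq_neg, ← smul_mulVec, ← smul_mulVec, ← add_mulVec]
  have hnorm : a ^ 2 • (star x ⬝ᵥ x) = b ^ 2 • (star x ⬝ᵥ x) := by
    simpa only [star_neg, StarModule.star_smul, star_trivial, neg_dotProduct, dotProduct_neg,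
      smul_neg, neg_neg, smul_dotProduct, dotProduct_smul, star_mulVec_dotProduct_mulVec hG,
      star_mulVec_dotProduct_mulVec hA, smul_smul, ← sq] using congrArg (fun v => star v ⬝ᵥ v) hGA
  rw [← sub_eq_zero, ← sub_smul] at hnorm
  exact (smul_eq_zero.mp hnorm).resolve_left (sub_ne_zero.mpr hab)

theorem star_dotProduct_eq_vecTail {D : Type*} [NonUnitalNonAssocSemiring D] [StarRing D] {k : ℕ}
    {x : Fin (k + 1) → D} (hx : x 0 = 0) (y : Fin (k + 1) → D) :
    star x ⬝ᵥ y = star (vecTail x) ⬝ᵥ vecTail y := by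
  simp [dotProduct, Fin.sum_univ_succ, hx, vecTail]

theorem vecTail_ne_zero {D : Type*} [Zero D] {k : ℕ} {x : Fin (k + 1) → D} (hx : x ≠ 0)
    (hx0 : x 0 = 0) : vecTail x ≠ 0 :=
  fun h => hx (funext (Fin.cases hx0 (congrFun h)))

end LinearAlgebra

section Cayley

variable {R : Type*} [Ring R] [Algebra ℝ R]

/-- The pencil spanned by `G` and `A`, parametrized so that `t = 1` gives `2G` and exchanging `G`
and `A` replaces `t` by `-t`. -/
def cayleyPencil (G A : R) (t : ℝ) : R :=
  (1 + t) • G + (1 - t) • A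

/-- The path from `G` to `A` that is a straight line from the origin in the coordinate
`(1 - W) (1 + W)⁻¹`, `W = A G⁻¹`, given by the Cayley transform centred at `G`. It is meaningful
only where `cayleyPencil G A t` is invertible. -/
noncomputable def cayleyPath (G A : R) (t : ℝ) : R :=
  cayleyPencil A G t * Ring.inverse (cayleyPencil G A t) * G

variable {G A : R} {t : ℝ}

theorem cayleyPath_zero (h : IsUnit (G + A)) : cayleyPath G A 0 = G := by
  simp [cayleyPath, cayleyPencil, add_comm A G, Ring.mul_inverse_cancel _ h]

theorem cayleyPath_one [Star R] (hG : star G * G = 1) (h : IsUnit (cayleyPencil G A 1)) :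
    cayleyPath G A 1 = A := by
  have hpencil : cayleyPencil A G 1 = A * star G * cayleyPencil G A 1 := by
    simp [cayleyPencil, mul_assoc, hG]
  rw [cayleyPath, hpencil, Ring.mul_inverse_cancel_right _ _ h, mul_assoc, hG, mul_one]

theorem star_cayleyPencil_mul_self_comm [StarRing R] [StarModule ℝ R] (hG : star G * G = 1)
    (hA : star A * A = 1) (t : ℝ) :
    star (cayleyPencil A G t) * cayleyPencil A G t =
      star (cayleyPencil G A t) * cayleyPencil G A t := by
  simp only [cayleyPencil, star_add, StarModule.star_smul, star_trivial, add_mul, mul_add,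
    smul_mul_assoc, mul_smul_comm, hG, hA]
  module

theorem star_cayleyPath_mul_self [StarRing R] [StarModule ℝ R] (hG : star G * G = 1)
    (hA : star A * A = 1) (h : IsUnit (cayleyPencil G A t)) :
    star (cayleyPath G A t) * cayleyPath G A t = 1 := by
  rw [cayleyPath]
  set N := cayleyPencil A G t
  set D := cayleyPencil G A t
  have hDD : D * Ring.inverse D = 1 := Ring.mul_inverse_cancel _ h
  calc star (N * Ring.inverse D * G) * (N * Ring.inverse D * G)
      = star G * (star (Ring.inverse D) * (star N * N) * Ring.inverse D) * G := by
        simp only [star_mul, mul_assoc]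
    _ = star G * (star (D * Ring.inverse D) * (D * Ring.inverse D)) * G := by
        rw [star_cayleyPencil_mul_self_comm hG hA, star_mul]
        simp only [D, mul_assoc]
    _ = 1 := by rw [hDD, star_one, mul_one, mul_one, hG]

theorem hasSummableGeomSeries_of_finiteDimensional {R : Type*} [NormedRing R] [NormedAlgebra ℝ R]
    [FiniteDimensional ℝ R] : HasSummableGeomSeries R :=
  have := FiniteDimensional.complete ℝ R
  inferInstance

theorem continuousAt_cayleyPath {R : Type*} [NormedRing R] [NormedAlgebra ℝ R]
    [HasSummableGeomSeries R] {G A : R} {t : ℝ} (h : IsUnit (cayleyPencil G A t)) :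
    ContinuousAt (fun p : ℝ × R => cayleyPath G p.2 p.1) (t, A) := by
  have hinv : ContinuousAt Ring.inverse (cayleyPencil G A t) := by
    obtain ⟨u, hu⟩ := h
    exact hu ▸ NormedRing.inverse_continuousAt u
  have hden : ContinuousAt (fun p : ℝ × R => cayleyPencil G p.2 p.1) (t, A) := by
    unfold cayleyPencil
    fun_prop
  have hnum : ContinuousAt (fun p : ℝ × R => cayleyPencil p.2 G p.1) (t, A) := by
    unfold cayleyPencil
    fun_prop
  exact (hnum.mul (hinv.comp_of_eq hden rfl)).mul continuousAt_const

end Cayley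

/-- The compact symplectic group `Sp(n)` of quaternionic `n × n` matrices, with the index type `n`
in place of a number; `Sp (Fin 3)` unfolds to `Sp3`. -/
abbrev Sp (n : Type*) [Fintype n] [DecidableEq n] : Type _ :=
  {A : Matrix n n ℍ[ℝ] // Aᴴ * A = 1}

namespace Sp

variable {n : Type*} [Fintype n] [DecidableEq n]

/-- The domain of the Cayley transform of `Sp(n)` centred at `G`. -/
def cayleyDomain (G : Sp n) : Set (Sp n) := {A | IsUnit (A.1 + G.1)}

theorem isUnit_cayleyPencil {G A : Sp n} (h : A ∈ cayleyDomain G) {t : ℝ} (ht : 0 ≤ t) :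
    IsUnit (cayleyPencil G.1 A.1 t) := by
  rcases ht.eq_or_lt with rfl | ht
  · simpa [cayleyPencil, cayleyDomain, add_comm] using h
  · exact isUnit_smul_add_smul_of_isometry G.2 A.2 fun h => ht.ne' (by linear_combination h / 4)

section Topology

attribute [local instance] Matrix.linftyOpNormedRing Matrix.linftyOpNormedAlgebra
  hasSummableGeomSeries_of_finiteDimensional

theorem isOpen_cayleyDomain (G : Sp n) : IsOpen (cayleyDomain G) :=
  Units.isOpen.preimage (continuous_subtype_val.add continuous_const)

theorem nullhomotopic_cayleyDomain (G : Sp n) :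
    (⟨Subtype.val, continuous_subtype_val⟩ : C(cayleyDomain G, Sp n)).Nullhomotopic := by
  have hunit (t : unitInterval) (A : cayleyDomain G) : IsUnit (cayleyPencil G.1 A.1.1 t) :=
    isUnit_cayleyPencil A.2 t.2.1
  let path (p : unitInterval × cayleyDomain G) : Sp n :=
    ⟨cayleyPath G.1 p.2.1.1 p.1, star_cayleyPath_mul_self G.2 p.2.1.2 (hunit p.1 p.2)⟩
  have hpath : Continuous path := by
    refine Continuous.subtype_mk (continuous_iff_continuousAt.mpr fun p => ?_) _
    exact (continuousAt_cayleyPath (hunit p.1 p.2)).comp_of_eq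
      (f := fun p : unitInterval × cayleyDomain G => ((p.1 : ℝ), p.2.1.1))
      (by fun_prop) rfl
  refine ⟨G, ContinuousMap.Homotopic.symm ⟨⟨⟨path, hpath⟩, fun A => ?_, fun A => ?_⟩⟩⟩
  · exact Subtype.ext (cayleyPath_zero (by rw [add_comm]; exact A.2))
  · exact Subtype.ext (cayleyPath_one G.2 (hunit 1 A))

end Topology

theorem catLE_of_forall_exists_isUnit_add {N : ℕ} {ι : Type*} [Finite ι]
    (hι : Nat.card ι = N + 1) (G : ι → Sp n) (h : ∀ A : Sp n, ∃ i, IsUnit (A.1 + (G i).1)) :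
    CatLE (Sp n) N := by
  let e := Finite.equivFinOfCardEq hι
  refine ⟨fun k => cayleyDomain (G (e.symm k)), fun _ => isOpen_cayleyDomain _,
    Set.iUnion_eq_univ_iff.mpr fun A => ?_, fun _ => nullhomotopic_cayleyDomain _⟩
  obtain ⟨i, hi⟩ := h A
  exact ⟨e i, by rwa [e.symm_apply_apply]⟩

end Sp

section Reflection

variable {n : Type*} [Fintype n] [DecidableEq n]

/-- The reflection in the coordinate hyperplane `x k = 0`. Multiplying a matrix by it on the right
negates the `k`-th column. -/
def coordReflection (D : Type*) [Ring D] (k : n) : Matrix n n D :=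
  diagonal (Function.update 1 k (-1))

variable {D : Type*} [Ring D]

theorem coordReflection_mulVec (k : n) (x : n → D) :
    coordReflection D k *ᵥ x = x - Pi.single k (2 * x k) := by
  ext i
  rcases eq_or_ne i k with rfl | hik
  · simp [coordReflection, mulVec_diagonal, two_mul]
  · simp [coordReflection, mulVec_diagonal, hik]

variable [StarRing D]

theorem conjTranspose_coordReflection_mul_self (k : n) :
    (coordReflection D k)ᴴ * coordReflection D k = 1 := by
  rw [coordReflection, diagonal_conjTranspose, diagonal_mul_diagonal, ← diagonal_one]
  congr 1
  ext i
  rcases eq_or_ne i k with rfl | hik <;> simp [*]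

theorem conjTranspose_mul_coordReflection_mul_self {G : Matrix n n D} (hG : Gᴴ * G = 1) (k : n) :
    (G * coordReflection D k)ᴴ * (G * coordReflection D k) = 1 := by
  rw [conjTranspose_mul, mul_assoc, ← mul_assoc Gᴴ, hG, one_mul,
    conjTranspose_coordReflection_mul_self]

/-- Where `A` agrees with `-G` at `x` and with `-G ∘ (reflection)` at `y`, comparing `⟪Ax, Ay⟫` with
`⟪x, y⟫` leaves `2 ⟪x k, y k⟫ = 0`, so that `x` or `y` lies in the hyperplane. -/
theorem exists_mulVec_eq_neg_mulVec_of_not_isUnit_add_mul_coordReflection {K : Type*}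
    [DivisionRing K] [StarRing K] [NeZero (2 : K)] {A G : Matrix n n K} (hA : Aᴴ * A = 1)
    (hG : Gᴴ * G = 1) (k : n) (h : ¬IsUnit (A + G))
    (h' : ¬IsUnit (A + G * coordReflection K k)) :
    ∃ x, x ≠ 0 ∧ x k = 0 ∧ A *ᵥ x = -(G *ᵥ x) := by
  obtain ⟨x, hx0, hx⟩ := exists_mulVec_eq_neg_mulVec_of_not_isUnit_add h
  obtain ⟨y, hy0, hy⟩ := exists_mulVec_eq_neg_mulVec_of_not_isUnit_add h'
  have hxy : star (x k) * (2 * y k) = 0 := by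
    have := star_mulVec_dotProduct_mulVec_of_mulVec_eq_neg hA hx hy
    rwa [← mulVec_mulVec, star_mulVec_dotProduct_mulVec hG, coordReflection_mulVec, dotProduct_sub,
      dotProduct_single, Pi.star_apply, sub_eq_self] at this
  rcases mul_eq_zero.mp hxy with hxk | hyk
  · exact ⟨x, hx0, star_eq_zero.mp hxk, hx⟩
  · have hyk : y k = 0 := (mul_eq_zero.mp hyk).resolve_left two_ne_zero
    refine ⟨y, hy0, hyk, ?_⟩
    rw [hy, ← mulVec_mulVec, coordReflection_mulVec, hyk, mul_zero, Pi.single_zero, sub_zero]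

theorem Sp.catLE_of_forall_exists_hyperplane {N : ℕ} {ι : Type*} [Finite ι]
    (hι : 2 * Nat.card ι = N + 1) (k : n) (G : ι → Sp n)
    (h : ∀ A : Sp n, ∃ i, ∀ x, x k = 0 → A.1 *ᵥ x = -((G i).1 *ᵥ x) → x = 0) :
    CatLE (Sp n) N := by
  let reflect (B : Sp n) : Sp n :=
    ⟨B.1 * coordReflection ℍ[ℝ] k, conjTranspose_mul_coordReflection_mul_self B.2 k⟩
  refine catLE_of_forall_exists_isUnit_add (ι := ι ⊕ ι) (by rw [Nat.card_sum, ← two_mul, hι])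
    (Sum.elim G (reflect ∘ G)) fun A => ?_
  by_contra! hA
  obtain ⟨i, hi⟩ := h A
  obtain ⟨x, hx, hxk, hAx⟩ := exists_mulVec_eq_neg_mulVec_of_not_isUnit_add_mul_coordReflection
    A.2 (G i).2 k (hA (.inl i)) (hA (.inr i))
  exact hx (hi x hxk hAx)

end Reflection

section Plane

variable {D : Type*} [DivisionRing D]

theorem exists_eq_mul_of_dotProduct_eq_zero {a y u : Fin 2 → D} (ha : a ≠ 0) (hy : y ≠ 0)
    (hay : a ⬝ᵥ y = 0) (hau : a ⬝ᵥ u = 0) : ∃ c, u = fun i => y i * c := by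
  obtain ⟨i, j, hi, hcover, hsum⟩ : ∃ i j, a i ≠ 0 ∧ (∀ k, k = i ∨ k = j) ∧
      ∀ w, a ⬝ᵥ w = a i * w i + a j * w j := by
    obtain ⟨i, hi⟩ := Function.ne_iff.mp ha
    refine ⟨i, i + 1, hi, by lia, fun w => ?_⟩
    fin_cases i <;> simp [dotProduct, Fin.sum_univ_two, add_comm]
  have hsolve {w : Fin 2 → D} (hw : a ⬝ᵥ w = 0) : w i = -((a i)⁻¹ * a j) * w j := by
    refine mul_left_cancel₀ hi ?_
    rw [hsum] at hw
    rw [neg_mul, mul_neg, mul_assoc, mul_inv_cancel_left₀ hi]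
    exact eq_neg_of_add_eq_zero_left hw
  have hyj : y j ≠ 0 := fun h => hy <| funext fun k => by
    obtain rfl | rfl := hcover k
    · rw [hsolve hay, h, mul_zero, Pi.zero_apply]
    · exact h
  refine ⟨(y j)⁻¹ * u j, funext fun k => ?_⟩
  obtain rfl | rfl := hcover k
  · rw [hsolve hay, hsolve hau, mul_assoc, mul_inv_cancel_left₀ hyj]
  · rw [mul_inv_cancel_left₀ hyj]

theorem star_dotProduct_eq_zero_of_orthogonal [StarRing D] {x y u v : Fin 2 → D} (hx : x ≠ 0)
    (hy : y ≠ 0) (hxy : star x ⬝ᵥ y = 0) (hxu : star x ⬝ᵥ u = 0) (hyv : star y ⬝ᵥ v = 0) :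
    star u ⬝ᵥ v = 0 := by
  obtain ⟨c, rfl⟩ := exists_eq_mul_of_dotProduct_eq_zero (star_ne_zero.mpr hx) hy hxy hxu
  calc star (fun i => y i * c) ⬝ᵥ v = star c * (star y ⬝ᵥ v) := by
        simp [dotProduct, mul_add, mul_assoc]
    _ = 0 := by rw [hyv, mul_zero]

theorem star_vecTail_dotProduct_vecTail_eq_zero_of_orthogonal [StarRing D] {x y u v : Fin 3 → D}
    (hx : x ≠ 0) (hx0 : x 0 = 0) (hy : y ≠ 0) (hy0 : y 0 = 0) (hxy : star x ⬝ᵥ y = 0)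
    (hxu : star x ⬝ᵥ u = 0) (hyv : star y ⬝ᵥ v = 0) : star (vecTail u) ⬝ᵥ vecTail v = 0 := by
  rw [star_dotProduct_eq_vecTail hx0] at hxy hxu
  rw [star_dotProduct_eq_vecTail hy0] at hyv
  exact star_dotProduct_eq_zero_of_orthogonal (vecTail_ne_zero hx hx0) (vecTail_ne_zero hy hy0)
    hxy hxu hyv

end Plane

section Twist

theorem star_coeComplex_I : star (Complex.I : ℍ[ℝ]) = -(Complex.I : ℍ[ℝ]) := by
  simp [Quaternion.star_eq_neg]

theorem coeComplex_I_mul_self : (Complex.I : ℍ[ℝ]) * (Complex.I : ℍ[ℝ]) = -1 := by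
  rw [← Quaternion.coeComplex_mul, Complex.I_mul_I]
  ext <;> simp

theorem re_star_mul_coeComplex_I_mul (a : ℍ[ℝ]) : (star a * (Complex.I * a)).re = 0 := by
  rw [← Quaternion.star_eq_neg]
  simp [star_coeComplex_I, mul_assoc]

theorem star_coeComplex_I_mul_sub_mul_add (a : ℍ[ℝ]) :
    star (Complex.I * a - a) * (Complex.I * a + a) = -((2 : ℝ) • (star a * (Complex.I * a))) := by
  have hII : star a * Complex.I * (Complex.I * a) = -(star a * a) := by
    rw [mul_assoc, ← mul_assoc (Complex.I : ℍ[ℝ]), coeComplex_I_mul_self, neg_one_mul, mul_neg]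
  rw [star_sub, star_mul, star_coeComplex_I, mul_neg, sub_mul, mul_add, mul_add, neg_mul, neg_mul,
    hII, mul_assoc, two_smul]
  abel

/-- The element of `Sp(3)` with columns `e₂`, `i e₁`, `e₀`. Its compression to the
plane `e₀^⊥` is the diagonal matrix `diag(i, 0)`. -/
noncomputable def twistedSwap : Sp3 :=
  ⟨!![0, 0, 1; 0, (Complex.I : ℍ[ℝ]), 0; 1, 0, 0], by
    ext1 i j
    fin_cases i <;> fin_cases j <;>
      simp [mul_apply, Fin.sum_univ_three, star_coeComplex_I, coeComplex_I_mul_self]⟩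

theorem vecTail_twistedSwap_mulVec {z : Fin 3 → ℍ[ℝ]} (hz : z 0 = 0) :
    vecTail (twistedSwap.1 *ᵥ z) = ![Complex.I * z 1, 0] := by
  ext1 i
  fin_cases i <;> simp [twistedSwap, vecTail, vecHead, hz]

theorem eq_zero_of_star_twistedSwap_sub_dotProduct_twistedSwap_add {z : Fin 3 → ℍ[ℝ]}
    (hz0 : z 0 = 0)
    (h : star (vecTail (twistedSwap.1 *ᵥ z - z)) ⬝ᵥ vecTail (twistedSwap.1 *ᵥ z + z) = 0) :
    z = 0 := by
  have hsum : (2 : ℝ) • (star (z 1) * (Complex.I * z 1)) + ((normSq (z 2) : ℝ) : ℍ[ℝ]) = 0 := by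
    have hcoord : star (Complex.I * z 1 - z 1) * (Complex.I * z 1 + z 1) +
        star (0 - z 2) * (0 + z 2) = 0 := by
      rwa [tail_sub, tail_add, vecTail_twistedSwap_mulVec hz0, dotProduct, Fin.sum_univ_two] at h
    rwa [star_coeComplex_I_mul_sub_mul_add, zero_sub, zero_add, star_neg, neg_mul,
      Quaternion.star_mul_self, ← neg_add, neg_eq_zero] at hcoord
  have hz2 : z 2 = 0 := by
    have hre := congrArg QuaternionAlgebra.re hsum
    rw [Quaternion.re_add, Quaternion.re_smul, re_star_mul_coeComplex_I_mul, smul_zero, zero_add,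
      Quaternion.re_coe] at hre
    exact normSq_eq_zero.mp hre
  have hI : (Complex.I : ℍ[ℝ]) ≠ 0 := fun h => by
    simpa using congrArg QuaternionAlgebra.imI h
  have hz1 : z 1 = 0 := by simpa [hz2, hI] using hsum
  ext1 i
  fin_cases i
  exacts [hz0, hz1, hz2]

end Twist

/-- The Lusternik–Schnirelmann category of `Sp(3)` is at most `5`: there are six
open sets covering `Sp(3)` whose inclusions are nullhomotopic. -/
theorem cat_Sp3_le_five : CatLE Sp3 5 := by
  refine Sp.catLE_of_forall_exists_hyperplane (ι := Fin 3) (by simp) 0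
    ![⟨1, by simp⟩, ⟨-1, by simp⟩, twistedSwap] fun A => ?_
  by_contra! h
  obtain ⟨x, hx0, hAx, hx⟩ := h 0
  obtain ⟨y, hy0, hAy, hy⟩ := h 1
  obtain ⟨z, hz0, hAz, hz⟩ := h 2
  have hinner := star_mulVec_dotProduct_mulVec A.2
  replace hAx : A.1 *ᵥ x = -x := by simpa using hAx
  replace hAy : A.1 *ᵥ y = y := by simpa [neg_mulVec] using hAy
  replace hAz : A.1 *ᵥ z = -(twistedSwap.1 *ᵥ z) := hAz
  have hxy : star x ⬝ᵥ y = 0 := by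
    have := hinner x y
    rwa [hAx, hAy, star_neg, neg_dotProduct, neg_eq_self] at this
  have hxz : star x ⬝ᵥ (twistedSwap.1 *ᵥ z - z) = 0 := by
    rw [dotProduct_sub, ← hinner x z, hAx, hAz, star_neg, neg_dotProduct_neg, sub_self]
  have hyz : star y ⬝ᵥ (twistedSwap.1 *ᵥ z + z) = 0 := by
    rw [dotProduct_add, ← hinner y z, hAy, hAz, dotProduct_neg, add_neg_cancel]
  exact hz (eq_zero_of_star_twistedSwap_sub_dotProduct_twistedSwap_add hz0
    (star_vecTail_dotProduct_vecTail_eq_zero_of_orthogonal hx hx0 hy hy0 hxy hxz hyz))
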